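/- Let U and V be finite-dimensional vector spaces over a field K and 𝒮 an affine subspace of L(U,V) with codim 𝒮 ≤ dim V − 2, and codim 𝒮 ≤ dim V − 3 if K has exactly 2 elements. Then every quasi-range-compatible affine map F : 𝒮 → V is local. -/

import Mathlib

open Module in
/-- the functional `s ↦ y (s b)` -/
def qrRho {K U V : Type*} [Field K] [AddCommGroup U] [Module K U] [AddCommGroup V] [Module K V]
    (b : U) (y : Dual K V) : Dual K (U →ₗ[K] V) where
  toFun s := y (s b)
  map_add' := by intros; simp
  map_smul' := by intros; simp

open Module in
/-- maps killed by all functionals of `X` -/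
def qrM {K : Type*} (U : Type*) {V : Type*} [Field K] [AddCommGroup U] [Module K U]
    [AddCommGroup V] [Module K V]
    (X : Submodule K (Dual K V)) : Submodule K (U →ₗ[K] V) where
  carrier := {s | ∀ x ∈ X, ∀ a, x (s a) = 0}
  add_mem' := by
    intro s t hs ht x hx a
    simp [hs x hx a, ht x hx a]
  zero_mem' := by intro x hx a; simp
  smul_mem' := by
    intro c s hs x hx a
    simp [hs x hx a]

section
open Module
variable {K U V : Type*} [Field K]
    [AddCommGroup U] [Module K U] [FiniteDimensional K U]
    [AddCommGroup V] [Module K V] [FiniteDimensional K V]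

theorem qr_rho_mem {X : Submodule K (Dual K V)} {x : Dual K V} (hx : x ∈ X) (b : U) :
    qrRho b x ∈ (qrM U X).dualAnnihilator := by
  rw [Submodule.mem_dualAnnihilator]
  intro s hs
  exact hs x hx b

theorem qr_rho_not {X : Submodule K (Dual K V)} {x : Dual K V} (hx : x ∉ X) (b : U)
    (h : qrRho b x ∈ (qrM U X).dualAnnihilator) : b = 0 := by
  by_contra hb
  apply hx
  rw [← Subspace.dualCoannihilator_dualAnnihilator_eq (W := X)]
  rw [Submodule.mem_dualAnnihilator]
  intro v hv
  rw [Submodule.mem_dualCoannihilator] at hv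
  obtain ⟨φ, hφ⟩ : ∃ φ : Dual K U, φ b ≠ 0 := by
    by_contra! hc
    exact hb ((Module.forall_dual_apply_eq_zero_iff K b).1 hc)
  rw [Submodule.mem_dualAnnihilator] at h
  have := h (φ.smulRight v) (by
    intro y hy a
    simp [hv y hy])
  simp [qrRho] at this
  tauto

theorem qr_mono {X Y : Submodule K (Dual K V)} (h : X ≤ Y) :
    (qrM U X).dualAnnihilator ≤ (qrM U Y).dualAnnihilator := by
  apply Submodule.dualAnnihilator_anti
  intro s hs x hx
  exact hs x (h hx)

theorem qr_key (T : Submodule K (Dual K (U →ₗ[K] V))) (X : Submodule K (Dual K V)) :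
    ∃ Y : Submodule K (Dual K V), X ≤ Y ∧ finrank K Y ≤ finrank K X + finrank K T ∧
      ∀ y ∉ Y, ∀ b : U, ∀ r ∈ (qrM U X).dualAnnihilator, qrRho b y + r ∈ T → b = 0 := by
  let Q : Set (Submodule K (Dual K V)) := {Y | X ≤ Y ∧ finrank K Y ≤ finrank K X +
    finrank K (T ⊓ (qrM U Y).dualAnnihilator : Submodule K (Dual K (U →ₗ[K] V)))}
  have hX : X ∈ Q := ⟨le_rfl, by omega⟩
  obtain ⟨Y, hY⟩ := exists_maximal_of_wellFoundedGT (fun Y => Y ∈ Q) ⟨X, hX⟩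
  refine ⟨Y, hY.1.1, hY.1.2.trans ?_, ?_⟩
  · have := Submodule.finrank_mono (R := K) (inf_le_left : T ⊓ (qrM U Y).dualAnnihilator ≤ T)
    omega
  intro y hy b r hr hT
  by_contra hb
  have hlt : Y < Y ⊔ K ∙ y := by
    refine lt_of_le_of_ne le_sup_left fun h => hy ?_
    rw [h]
    exact Submodule.mem_sup_right (Submodule.mem_span_singleton_self y)
  have hyY : y ∈ Y ⊔ K ∙ y := Submodule.mem_sup_right (Submodule.mem_span_singleton_self y)
  have hmem : Y ⊔ K ∙ y ∈ Q := by
    refine ⟨hY.1.1.trans le_sup_left, ?_⟩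
    have h1 : finrank K (Y ⊔ K ∙ y : Submodule K (Dual K V)) ≤ finrank K Y + 1 := by
      refine (Submodule.finrank_add_le_finrank_add_finrank _ _).trans ?_
      have := finrank_span_le_card (R := K) ({y} : Set (Dual K V))
      simp at this
      omega
    have h2 : finrank K (T ⊓ (qrM U Y).dualAnnihilator : Submodule K (Dual K (U →ₗ[K] V))) <
        finrank K (T ⊓ (qrM U (Y ⊔ K ∙ y)).dualAnnihilator :
          Submodule K (Dual K (U →ₗ[K] V))) := by
      apply Submodule.finrank_lt_finrank_of_lt
      refine lt_of_le_of_ne (inf_le_inf_left _ (qr_mono le_sup_left)) fun h => ?_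
      have h3 : qrRho b y + r ∈ T ⊓ (qrM U (Y ⊔ K ∙ y)).dualAnnihilator :=
        ⟨hT, add_mem (qr_rho_mem hyY b) (qr_mono (hY.1.1.trans le_sup_left) hr)⟩
      rw [← h] at h3
      have h4 := sub_mem h3.2 (qr_mono hY.1.1 hr)
      rw [add_sub_cancel_right] at h4
      exact hb (qr_rho_not hy b h4)
    have := hY.1.2
    omega
  exact absurd (hY.2 hmem hlt.le) (not_le_of_gt hlt)

theorem qr_exists_one {d : V} (hd : d ≠ 0) (Y : Submodule K (Dual K V))
    (hY : finrank K Y < finrank K V) : ∃ y : Dual K V, y d = 1 ∧ y ∉ Y := by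
  obtain ⟨e, he⟩ : ∃ φ : Dual K V, φ d = 1 := by
    obtain ⟨φ, hφ⟩ : ∃ φ : Dual K V, φ d ≠ 0 := by
      by_contra! hc
      exact hd ((Module.forall_dual_apply_eq_zero_iff K d).1 hc)
    exact ⟨(φ d)⁻¹ • φ, by simp [hφ]⟩
  by_cases heY : e ∈ Y
  · obtain ⟨p, hp⟩ : ∃ p, p ∉ Y := by
      by_contra! hc
      rw [(Submodule.eq_top_iff' (p := Y)).2 hc, finrank_top, Subspace.dual_finrank_eq] at hY
      omega
    refine ⟨p + (1 - p d) • e, by simp [he], fun h => hp ?_⟩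
    simpa using sub_mem h (Y.smul_mem (1 - p d) heY)
  · exact ⟨e, he, heY⟩

theorem qr_top {d : V} (hd : d ≠ 0) (P : Submodule K (Dual K V))
    (hP : ∀ y : Dual K V, y d = 1 → y ∈ P) (hV : 0 < finrank K V) (p : Dual K V) : p ∈ P := by
  obtain ⟨e, he, -⟩ := qr_exists_one hd (⊥ : Submodule K (Dual K V)) (by simpa using hV)
  have h1 := hP (p + (1 - p d) • e) (by simp [he])
  simpa using sub_mem h1 (P.smul_mem (1 - p d) (hP e he))

theorem qr_good (S : Submodule K (U →ₗ[K] V)) (x : Dual K V)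
    (hx : ∀ b : U, qrRho b x ∈ S.dualAnnihilator → b = 0) :
    Function.Surjective ((LinearMap.compRight K x (M := U)).comp S.subtype) := by
  rw [← LinearMap.range_eq_top]
  rw [← Subspace.dualCoannihilator_dualAnnihilator_eq
    (W := LinearMap.range ((LinearMap.compRight K x (M := U)).comp S.subtype))]
  have : (LinearMap.range ((LinearMap.compRight K x (M := U)).comp S.subtype)
      ).dualCoannihilator = ⊥ := by
    rw [eq_bot_iff]
    intro b hb
    rw [Submodule.mem_dualCoannihilator] at hb
    apply hx
    rw [Submodule.mem_dualAnnihilator]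
    intro s hs
    exact hb _ ⟨⟨s, hs⟩, rfl⟩
  rw [this, Submodule.dualAnnihilator_bot]

theorem qr_eval
    (𝒮 : AffineSubspace K (U →ₗ[K] V)) [Nonempty ↥𝒮] (F : ↥𝒮 →ᵃ[K] V) (x : Dual K V)
    (hF : ∀ s : ↥𝒮, x ∘ₗ (s : U →ₗ[K] V) = 0 → x (F s) = 0)
    (hx : ∀ b : U, qrRho b x ∈ 𝒮.direction.dualAnnihilator → b = 0) :
    ∃ u : U, ∀ s : ↥𝒮, x (F s) = x ((s : U →ₗ[K] V) u) := by
  have hs := qr_good _ x hx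
  set L := (LinearMap.compRight K x (M := U)).comp 𝒮.direction.subtype with hL
  obtain ⟨s0⟩ := ‹Nonempty ↥𝒮›
  obtain ⟨t, ht⟩ := hs (- (x ∘ₗ (s0 : U →ₗ[K] V)))
  have ht' : x ∘ₗ (t : U →ₗ[K] V) = - (x ∘ₗ (s0 : U →ₗ[K] V)) := ht
  let s1 : ↥𝒮 := t +ᵥ s0
  have hs1 : x ∘ₗ (s1 : U →ₗ[K] V) = 0 := by
    have : (s1 : U →ₗ[K] V) = (t : U →ₗ[K] V) + s0 := rfl
    rw [this, LinearMap.comp_add, ht']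
    simp
  have hker : LinearMap.ker L ≤ LinearMap.ker (x ∘ₗ F.linear) := by
    intro r hr
    have hr' : x ∘ₗ (r : U →ₗ[K] V) = 0 := hr
    have h1 := hF (r +ᵥ s1) (by
      have : ((r +ᵥ s1 : ↥𝒮) : U →ₗ[K] V) = (r : U →ₗ[K] V) + s1 := rfl
      rw [this, LinearMap.comp_add, hr', hs1, add_zero])
    rw [AffineMap.map_vadd, vadd_eq_add, map_add, hF s1 hs1, add_zero] at h1
    exact h1
  obtain ⟨σ, hσ⟩ := L.exists_rightInverse_of_surjective (LinearMap.range_eq_top.2 hs)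
  let u : U := (Module.evalEquiv K U).symm ((x ∘ₗ F.linear) ∘ₗ σ)
  have hu : ∀ φ : Dual K U, φ u = x (F.linear (σ φ)) := by
    intro φ
    simp [u]
  refine ⟨u, fun s => ?_⟩
  let r : 𝒮.direction := s -ᵥ s1
  have hsr : s = r +ᵥ s1 := by simp [r]
  have h1 : (x ∘ₗ F.linear) (r - σ (L r)) = 0 := by
    apply hker
    rw [LinearMap.mem_ker, map_sub]
    have := LinearMap.congr_fun hσ (L r)
    simp only [LinearMap.comp_apply, LinearMap.id_apply] at this
    rw [this, sub_self]
  rw [map_sub, sub_eq_zero] at h1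
  have h2 : x (F s) = x (F.linear r) := by
    rw [hsr, AffineMap.map_vadd, vadd_eq_add, map_add, hF s1 hs1, add_zero]
  have h3 : (s : U →ₗ[K] V) = (r : U →ₗ[K] V) + s1 := by rw [hsr]; rfl
  have h4 : x ((s1 : U →ₗ[K] V) u) = 0 := LinearMap.congr_fun hs1 u
  rw [h2, h3, LinearMap.add_apply, map_add, h4, add_zero]
  exact h1.trans (hu (L r)).symm

/-- the functionals on which `F` agrees with the local map at `u` -/
def qrP (𝒮 : AffineSubspace K (U →ₗ[K] V)) [Nonempty ↥𝒮] (F : ↥𝒮 →ᵃ[K] V) (u : U) :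
    Submodule K (Dual K V) where
  carrier := {y | ∀ s : ↥𝒮, y (F s) = y ((s : U →ₗ[K] V) u)}
  add_mem' := by
    intro a b ha hb s
    simp [ha s, hb s]
  zero_mem' := by intro s; simp
  smul_mem' := by
    intro c a ha s
    simp [ha s]

/-- A functional vanishing on an affine subspace annihilates the direction. -/
theorem qr_dir (𝒮 : AffineSubspace K (U →ₗ[K] V)) [Nonempty ↥𝒮]
    (g : Dual K (U →ₗ[K] V)) (hg : ∀ s : ↥𝒮, g (s : U →ₗ[K] V) = 0) :
    g ∈ 𝒮.direction.dualAnnihilator := by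
  rw [Submodule.mem_dualAnnihilator]
  intro r hr
  obtain ⟨s0⟩ := ‹Nonempty ↥𝒮›
  have h1 := hg ((⟨r, hr⟩ : 𝒮.direction) +ᵥ s0)
  have h2 : (((⟨r, hr⟩ : 𝒮.direction) +ᵥ s0 : ↥𝒮) : U →ₗ[K] V) = r + s0 := rfl
  rw [h2, map_add, hg s0, add_zero] at h1
  exact h1

end


/-- Let `𝒮` be an affine subspace of `L(U,V)` with
`codim 𝒮 ≤ dim V − 2`, and `codim 𝒮 ≤ dim V − 3` if `K` has exactly 2 elements. Then
every quasi-range-compatible affine map `F : 𝒮 → V` is local. -/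
theorem quasi_range_compatible_affine_map_is_local
    (K U V : Type*) [Field K]
    [AddCommGroup U] [Module K U] [FiniteDimensional K U]
    [AddCommGroup V] [Module K V] [FiniteDimensional K V]
    (𝒮 : AffineSubspace K (U →ₗ[K] V)) [Nonempty ↥𝒮]
    (h1 : Module.finrank K (U →ₗ[K] V) + 2 ≤
      Module.finrank K 𝒮.direction + Module.finrank K V)
    (h2 : Nat.card K = 2 → Module.finrank K (U →ₗ[K] V) + 3 ≤
      Module.finrank K 𝒮.direction + Module.finrank K V)
    (F : ↥𝒮 →ᵃ[K] V)
    (hq : ∃ D : Submodule K V, Module.finrank K D = 1 ∧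
      ∀ s : ↥𝒮, ¬ D ≤ LinearMap.range (s : U →ₗ[K] V) →
        F s ∈ LinearMap.range (s : U →ₗ[K] V)) :
    ∃ x : U, ∀ s : ↥𝒮, F s = (s : U →ₗ[K] V) x := by
  classical
  obtain ⟨D, hD, hq⟩ := hq
  obtain ⟨d, hd0, hd⟩ := finrank_eq_one_iff'.1 hD
  have hd0' : (d : V) ≠ 0 := by simpa using hd0
  set δ : V := (d : V) with hδ
  have hF : ∀ x : Module.Dual K V, x δ = 1 → ∀ s : ↥𝒮, x ∘ₗ (s : U →ₗ[K] V) = 0 →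
      x (F s) = 0 := by
    intro x hx s hs
    obtain ⟨a, ha⟩ := hq s (fun h => by
      obtain ⟨a, ha⟩ := h d.2
      have h1 := LinearMap.congr_fun hs a
      rw [LinearMap.comp_apply, ha, hx] at h1
      exact one_ne_zero h1)
    rw [← ha]
    exact LinearMap.congr_fun hs a
  set T := 𝒮.direction.dualAnnihilator with hTdef
  have hT : Module.finrank K 𝒮.direction + Module.finrank K T =
      Module.finrank K (U →ₗ[K] V) := Subspace.finrank_add_finrank_dualAnnihilator_eq _
  have hgood : ∀ x : Module.Dual K V, x δ = 1 → (∀ b : U, qrRho b x ∈ T → b = 0) →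
      ∃ u : U, ∀ s : ↥𝒮, x (F s) = x ((s : U →ₗ[K] V) u) :=
    fun x hx hb => qr_eval 𝒮 F x (hF x hx) hb
  obtain ⟨W, -, hWd, hW⟩ := qr_key T ⊥
  rw [finrank_bot] at hWd
  obtain ⟨x, hxδ, hxW⟩ := qr_exists_one hd0' W (by omega)
  have hx : ∀ b : U, qrRho b x ∈ T → b = 0 := fun b hb =>
    hW x hxW b 0 (zero_mem _) (by rwa [add_zero])
  obtain ⟨u, hu⟩ := hgood x hxδ hx
  obtain ⟨Y, hXY, hYd, hY⟩ := qr_key T (K ∙ x)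
  have hx1 : Module.finrank K (K ∙ x) ≤ 1 := by
    have := finrank_span_le_card (R := K) ({x} : Set (Module.Dual K V))
    simpa using this
  have hxX : x ∈ K ∙ x := Submodule.mem_span_singleton_self x
  have hYgood : ∀ y ∉ Y, ∀ b : U, qrRho b y ∈ T → b = 0 := fun y hy b hb =>
    hY y hy b 0 (zero_mem _) (by rwa [add_zero])
  suffices hP : ∀ y : Module.Dual K V, y δ = 1 → y ∈ qrP 𝒮 F u by
    refine ⟨u, fun s => ?_⟩
    rw [← sub_eq_zero, ← Module.forall_dual_apply_eq_zero_iff K]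
    intro y
    have := qr_top hd0' _ hP (by omega) y s
    rw [map_sub, this, sub_self]
  by_cases hK : Nat.card K = 2
  · have h3 := h2 hK
    have hmain : ∀ y : Module.Dual K V, y δ = 1 → y ∉ Y → y ∈ qrP 𝒮 F u := by
      intro y hyδ hyY
      obtain ⟨v, hv⟩ := hgood y hyδ (hYgood y hyY)
      obtain ⟨Z, hXZ, hZd, hZ⟩ := qr_key T ((K ∙ x) ⊔ (K ∙ y))
      have hy1 : Module.finrank K ((K ∙ x) ⊔ (K ∙ y) : Submodule K (Module.Dual K V)) ≤ 2 := by
        refine (Submodule.finrank_add_le_finrank_add_finrank _ _).trans ?_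
        have := finrank_span_le_card (R := K) ({y} : Set (Module.Dual K V))
        simp at this
        omega
      obtain ⟨z, hzδ, hzZ⟩ := qr_exists_one hd0' Z (by omega)
      have hxm : x ∈ (K ∙ x) ⊔ (K ∙ y) := Submodule.mem_sup_left hxX
      have hym : y ∈ (K ∙ x) ⊔ (K ∙ y) :=
        Submodule.mem_sup_right (Submodule.mem_span_singleton_self y)
      have hwZ : z + (y - x) ∉ Z := fun h => hzZ (by
        simpa using sub_mem h (sub_mem (hXZ hym) (hXZ hxm)))
      have hZgood : ∀ y ∉ Z, ∀ b : U, qrRho b y ∈ T → b = 0 := fun y hy b hb =>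
        hZ y hy b 0 (zero_mem _) (by rwa [add_zero])
      obtain ⟨a, ha⟩ := hgood z hzδ (hZgood z hzZ)
      obtain ⟨c, hc⟩ := hgood (z + (y - x)) (by simp [hzδ, hyδ, hxδ]) (hZgood _ hwZ)
      have e1 : qrRho (a - c) z + (qrRho (v - c) y - qrRho (u - c) x) ∈ T := by
        apply qr_dir
        intro s
        have := hc s
        simp only [LinearMap.add_apply, LinearMap.sub_apply, ha s, hv s, hu s] at this
        simp only [LinearMap.add_apply, LinearMap.sub_apply, qrRho, LinearMap.coe_mk,
          AddHom.coe_mk, map_sub]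
        linear_combination this
      have hac := hZ z hzZ _ _ (sub_mem (qr_rho_mem hym _) (qr_rho_mem hxm _)) e1
      have hr0 : ∀ x : Module.Dual K V, qrRho (0 : U) x = 0 := fun x => by
        ext s; simp [qrRho]
      rw [hac, hr0, zero_add, sub_eq_add_neg] at e1
      have hvc := hY y hyY _ _ (neg_mem (qr_rho_mem hxX _)) e1
      rw [hvc, hr0, zero_add] at e1
      have huc := hx _ (by simpa using neg_mem e1)
      have : v = u := (sub_eq_zero.1 hvc).trans (sub_eq_zero.1 huc).symm
      rw [← this]
      exact hv
    intro p hp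
    by_cases hpY : p ∈ Y
    · obtain ⟨a, haδ, haY⟩ := qr_exists_one hd0' Y (by omega)
      obtain ⟨b, hbδ, hbY⟩ := qr_exists_one hd0' (Y ⊔ K ∙ a) (by
        refine (Submodule.finrank_add_le_finrank_add_finrank _ _).trans_lt ?_
        have := finrank_span_le_card (R := K) ({a} : Set (Module.Dual K V))
        simp at this
        omega)
      have ham : a ∈ Y ⊔ K ∙ a :=
        Submodule.mem_sup_right (Submodule.mem_span_singleton_self a)
      have hb : b ∉ Y := fun h => hbY (Submodule.mem_sup_left h)
      have hc : p - a + b ∉ Y := fun h => hbY (by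
        have := sub_mem (Submodule.mem_sup_left (T := K ∙ a) h)
          (sub_mem (Submodule.mem_sup_left (T := K ∙ a) hpY) ham)
        simpa using this)
      have h5 := hmain _ (by simp [hp, haδ, hbδ]) hc
      have := add_mem (sub_mem h5 (hmain b hbδ hb)) (hmain a haδ haY)
      simpa using this
    · exact hmain p hp hpY
  · obtain ⟨α, hα0, hα1⟩ : ∃ α : K, α ≠ 0 ∧ α ≠ 1 := by
      by_contra! hc
      apply hK
      rw [Nat.card_eq_two_iff]
      refine ⟨0, 1, zero_ne_one, ?_⟩
      ext k
      have := hc k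
      simp
      tauto
    have hα1' : 1 - α ≠ 0 := sub_ne_zero.2 (Ne.symm hα1)
    have hmain : ∀ y : Module.Dual K V, y δ = 1 → y ∉ Y → y ∈ qrP 𝒮 F u := by
      intro y hyδ hyY
      obtain ⟨v, hv⟩ := hgood y hyδ (hYgood y hyY)
      have hzY : α • x + (1 - α) • y ∉ Y := fun h => hyY (by
        have h6 := sub_mem h (Y.smul_mem α (hXY hxX))
        rw [add_sub_cancel_left] at h6
        exact (Submodule.smul_mem_iff _ hα1').1 h6)
      obtain ⟨c, hc⟩ := hgood (α • x + (1 - α) • y) (by simp [hxδ, hyδ]) (hYgood _ hzY)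
      have e1 : qrRho ((1 - α) • (v - c)) y + qrRho (α • (u - c)) x ∈ T := by
        apply qr_dir
        intro s
        have := hc s
        simp only [LinearMap.add_apply, LinearMap.smul_apply, smul_eq_mul, hv s, hu s] at this
        simp only [LinearMap.add_apply, qrRho, LinearMap.coe_mk,
          AddHom.coe_mk, map_sub, map_smul, smul_eq_mul]
        linear_combination this
      have hvc := hY y hyY _ _ (qr_rho_mem hxX _) e1
      have hr0 : ∀ x : Module.Dual K V, qrRho (0 : U) x = 0 := fun x => by
        ext s; simp [qrRho]
      rw [hvc, hr0, zero_add] at e1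
      have huc := hx _ e1
      have hvc' := (smul_eq_zero.1 hvc).resolve_left hα1'
      have huc' := (smul_eq_zero.1 huc).resolve_left hα0
      have : v = u := (sub_eq_zero.1 hvc').trans (sub_eq_zero.1 huc').symm
      rw [← this]
      exact hv
    intro p hp
    by_cases hpY : p ∈ Y
    · obtain ⟨a, haδ, haY⟩ := qr_exists_one hd0' Y (by omega)
      have hb : α • p + (1 - α) • a ∉ Y := fun h => haY (by
        have h6 := sub_mem h (Y.smul_mem α hpY)
        rw [add_sub_cancel_left] at h6
        exact (Submodule.smul_mem_iff _ hα1').1 h6)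
      have h5 := hmain _ (by simp [hp, haδ]) hb
      have h6 := sub_mem h5 (Submodule.smul_mem _ (1 - α) (hmain a haδ haY))
      rw [add_sub_cancel_right] at h6
      exact (Submodule.smul_mem_iff _ hα0).1 h6
    · exact hmain p hp hpY
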